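/- Let ψ₀ : F_q → ℂ^× be a nontrivial character of the additive group of F_q, let m ≥ 1 be an integer and μ ∈ ℂ, and suppose that ε_χ^m = μ for every χ ∈ S_{n,q}. Then Σ ψ₀( Σ_{j=1}^m a_{n,j} ) = q^{m(n+1)/2 − 1} · μ, where the outer sum is over all arrays (a_{i,j}) ∈ F_q^{n·m} (1 ≤ i ≤ n, 1 ≤ j ≤ m) such that ∏_{j=1}^m (1 + Σ_{i=1}^n a_{i,j} x^i) ≡ 1 modulo x^{n+1} in F_q[x]. -/

import Mathlib

open Polynomial

noncomputable section

/-- The ring `F_q[x]/(x^(n+1))`. -/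
abbrev QuotR (F : Type) [Field F] (n : ℕ) : Type :=
  Polynomial F ⧸ Ideal.span {(Polynomial.X : Polynomial F) ^ (n + 1)}

/-- The quotient map `F_q[x] → F_q[x]/(x^(n+1))`. -/
def mkR (F : Type) [Field F] (n : ℕ) : Polynomial F →+* QuotR F n :=
  Ideal.Quotient.mk _

/-- A Dirichlet character modulo `x^(n+1)` is even if it is trivial on the constants. -/
def IsEvenChar (F : Type) [Field F] (n : ℕ) (ψ : MulChar (QuotR F n) ℂ) : Prop :=
  ∀ c : F, c ≠ 0 → ψ (mkR F n (Polynomial.C c)) = 1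

/-- A Dirichlet character modulo `x^(n+1)` is primitive if it is nontrivial on the
units congruent to `1` modulo `x^n` (which are exactly the `1 + a x^n`). -/
def IsPrimitiveChar (F : Type) [Field F] (n : ℕ) (ψ : MulChar (QuotR F n) ℂ) : Prop :=
  ∃ a : F, ψ (mkR F n (1 + Polynomial.C a * Polynomial.X ^ n)) ≠ 1

/-- The function `χ` on (monic) polynomials attached to a Dirichlet character `ψ`:
`χ(f) = ψ(f(x⁻¹) x^(deg f) mod x^(n+1))`. -/
def attachedChar (F : Type) [Field F] (n : ℕ) (ψ : MulChar (QuotR F n) ℂ) :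
    Polynomial F → ℂ :=
  fun f => ψ (mkR F n f.reverse)

/-- The family `S_{n,q}` of functions attached to primitive even Dirichlet characters. -/
def Snq (F : Type) [Field F] (n : ℕ) : Set (Polynomial F → ℂ) :=
  {χ | ∃ ψ : MulChar (QuotR F n) ℂ,
    IsEvenChar F n ψ ∧ IsPrimitiveChar F n ψ ∧ χ = attachedChar F n ψ}

/-- The sum of `χ(f)` over monic polynomials of degree `d`. -/
def coeffSum (F : Type) [Field F] (χ : Polynomial F → ℂ) (d : ℕ) : ℂ :=
  ∑ᶠ f ∈ {f : Polynomial F | f.Monic ∧ f.natDegree = d}, χ f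

/-- `λ_d(χ) = q^(-d/2) ∑_{f monic, deg f = d} χ(f)`. -/
def lam (F : Type) [Field F] [Fintype F] (χ : Polynomial F → ℂ) (d : ℕ) : ℂ :=
  ((((Fintype.card F : ℝ) ^ (-(d : ℝ) / 2) : ℝ)) : ℂ) * coeffSum F χ d

/-- The epsilon factor `ε_χ = λ_{n-1}(χ)`. -/
def epsFactor (F : Type) [Field F] [Fintype F] (n : ℕ) (χ : Polynomial F → ℂ) : ℂ :=
  lam F χ (n - 1)

/-- The L-function `L(s,χ) = ∑_{d=0}^{n-1} λ_d(χ) q^(d(1/2-s))`. -/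
def Lfun (F : Type) [Field F] [Fintype F] (n : ℕ) (χ : Polynomial F → ℂ) (s : ℂ) : ℂ :=
  ∑ d ∈ Finset.range n, lam F χ d * (Fintype.card F : ℂ) ^ ((d : ℂ) * (1 / 2 - s))

lemma finite_QuotR (F : Type) [Field F] [Fintype F] (n : ℕ) : Finite (QuotR F n) := by
  have := (Polynomial.monic_X_pow (R := F) (n + 1)).finite_quotient
  exact Module.finite_of_finite F

lemma mkR_X_pow_eq_zero (F : Type) [Field F] (n k : ℕ) (hk : n + 1 ≤ k) :
    mkR F n (X ^ k) = 0 := by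
  unfold mkR
  rw [Ideal.Quotient.eq_zero_iff_mem, Ideal.mem_span_singleton]
  exact pow_dvd_pow X hk

/-- Orthogonality for characters of `M`. -/
lemma sum_mulChar_apply {M : Type} [CommMonoid M] [Finite M] [Fintype (MulChar M ℂ)]
    [DecidableEq M] (r : M) :
    ∑ ψ : MulChar M ℂ, ψ r = if r = 1 then (Fintype.card (MulChar M ℂ) : ℂ) else 0 := by
  split_ifs with h
  · subst h; simp
  · have : NeZero (Monoid.exponent Mˣ) := ⟨Monoid.exponent_ne_zero_of_finite⟩
    obtain ⟨φ, hφ⟩ := MulChar.exists_apply_ne_one_of_hasEnoughRootsOfUnity M ℂ h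
    have h1 : ∑ ψ : MulChar M ℂ, ψ r = φ r * ∑ ψ : MulChar M ℂ, ψ r := by
      rw [Finset.mul_sum]
      simp_rw [← MulChar.mul_apply]
      exact (Equiv.sum_comp (Equiv.mulLeft φ) (fun ψ : MulChar M ℂ => ψ r)).symm
    have h2 : (φ r - 1) * ∑ ψ : MulChar M ℂ, ψ r = 0 := by
      rw [sub_mul, one_mul, ← h1, sub_self]
    exact (mul_eq_zero.mp h2).resolve_left (sub_ne_zero.mpr hφ)

/-- Evaluation at `0`. -/
def ev0 (F : Type) [Field F] (n : ℕ) : QuotR F n →+* F :=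
  Ideal.Quotient.lift _ (Polynomial.constantCoeff (R := F)) (by
    intro a ha
    rw [Ideal.mem_span_singleton] at ha
    obtain ⟨b, rfl⟩ := ha
    simp)

lemma ev0_mkR (F : Type) [Field F] (n : ℕ) (f : F[X]) : ev0 F n (mkR F n f) = f.coeff 0 := by
  simp [ev0, mkR]

/-- Make a character even. -/
def evenize (F : Type) [Field F] (n : ℕ) (ψ : MulChar (QuotR F n) ℂ) :
    MulChar (QuotR F n) ℂ where
  toFun r := ψ r * (ψ (mkR F n (C (ev0 F n r))))⁻¹
  map_one' := by simp
  map_mul' a b := by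
    simp only [map_mul, mul_inv]
    ring
  map_nonunit' a ha := by rw [MulChar.map_nonunit ψ ha, zero_mul]

lemma evenize_apply (F : Type) [Field F] (n : ℕ) (ψ : MulChar (QuotR F n) ℂ) (r : QuotR F n) :
    evenize F n ψ r = ψ r * (ψ (mkR F n (C (ev0 F n r))))⁻¹ := rfl

lemma evenize_even (F : Type) [Field F] (n : ℕ) (ψ : MulChar (QuotR F n) ℂ) :
    IsEvenChar F n (evenize F n ψ) := by
  intro c hc
  rw [evenize_apply, ev0_mkR, coeff_C_zero]
  apply mul_inv_cancel₀
  have : IsUnit (mkR F n (C c)) := ((isUnit_iff_ne_zero.mpr hc).map C).map (mkR F n)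
  exact (this.map ψ).ne_zero

lemma evenize_one_unit (F : Type) [Field F] (n : ℕ) (ψ : MulChar (QuotR F n) ℂ) (f : F[X])
    (hf : f.coeff 0 = 1) : evenize F n ψ (mkR F n f) = ψ (mkR F n f) := by
  rw [evenize_apply, ev0_mkR, hf]; simp

/-- The polynomial `1 + ∑ c_i x^(i+1)`. -/
def pol (F : Type) [Field F] (k : ℕ) (c : Fin k → F) : F[X] :=
  1 + ∑ i : Fin k, C (c i) * X ^ ((i : ℕ) + 1)

lemma pol_coeff_zero (F : Type) [Field F] (k : ℕ) (c : Fin k → F) : (pol F k c).coeff 0 = 1 := by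
  simp [pol, coeff_X_pow]

lemma pol_coeff_succ (F : Type) [Field F] (k : ℕ) (c : Fin k → F) (i : Fin k) :
    (pol F k c).coeff (i + 1) = c i := by
  simp [pol, coeff_X_pow, coeff_one, Fin.val_inj]

lemma pol_natDegree (F : Type) [Field F] (k : ℕ) (c : Fin k → F) : (pol F k c).natDegree ≤ k := by
  unfold pol
  refine (natDegree_add_le _ _).trans (max_le (by simp) ?_)
  refine natDegree_sum_le_of_forall_le _ _ fun i _ => ?_
  exact (natDegree_C_mul_X_pow_le _ _).trans (by omega)

lemma coeffSum_attached (F : Type) [Field F] [Fintype F] (n k : ℕ) (ψ : MulChar (QuotR F n) ℂ) :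
    coeffSum F (attachedChar F n ψ) k = ∑ c : Fin k → F, ψ (mkR F n (pol F k c)) := by
  have hdeg : ∀ c, (reflect k (pol F k c)).coeff k = 1 := by
    intro c
    rw [coeff_reflect, revAt_le le_rfl, Nat.sub_self, pol_coeff_zero]
  have hnd : ∀ c, (reflect k (pol F k c)).natDegree = k := by
    intro c
    apply le_antisymm
    · exact natDegree_reflect_le.trans (by simp [pol_natDegree])
    · exact le_natDegree_of_ne_zero (by rw [hdeg]; exact one_ne_zero)
  have hrev : ∀ c, (reflect k (pol F k c)).reverse = pol F k c := by
    intro c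
    rw [reverse, hnd, reflect_reflect]
  unfold coeffSum
  rw [← finsum_eq_sum_of_fintype, ← finsum_mem_univ (fun c : Fin k → F => ψ (mkR F n (pol F k c)))]
  symm
  refine finsum_mem_eq_of_bijOn (fun c => reflect k (pol F k c)) ⟨?_, ?_, ?_⟩ ?_
  · intro c _
    refine ⟨?_, hnd c⟩
    rw [Monic, leadingCoeff, hnd, hdeg]
  · intro c _ d _ hcd
    have : pol F k c = pol F k d := by rw [← hrev c, ← hrev d]; exact congrArg _ hcd
    ext i
    rw [← pol_coeff_succ F k c i, this, pol_coeff_succ]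
  · rintro f ⟨hf, hk⟩
    refine ⟨fun i => f.reverse.coeff (i + 1), trivial, ?_⟩
    have : pol F k (fun i => f.reverse.coeff (i + 1)) = f.reverse := by
      ext j
      rcases j with _ | j
      · rw [pol_coeff_zero, coeff_zero_reverse, hf.leadingCoeff]
      · by_cases hj : j < k
        · exact pol_coeff_succ F k _ ⟨j, hj⟩
        · rw [coeff_eq_zero_of_natDegree_lt, coeff_eq_zero_of_natDegree_lt]
          · exact (reverse_natDegree_le f).trans_lt (by omega)
          · exact (pol_natDegree F k _).trans_lt (by omega)
    simp only [this]
    rw [reverse, hk, reflect_reflect]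
  · intro c _
    simp only [attachedChar, hrev]

lemma mkR_one_add_mul (F : Type) [Field F] (n : ℕ) (hn : 1 ≤ n) (a b : F) :
    mkR F n (1 + C (a + b) * X ^ n) = mkR F n (1 + C a * X ^ n) * mkR F n (1 + C b * X ^ n) := by
  have h := mkR_X_pow_eq_zero F n (n + n) (by omega)
  rw [← map_mul, show (1 + C a * X ^ n) * (1 + C b * X ^ n) =
    (1 + C (a + b) * X ^ n) + C (a * b) * X ^ (n + n) by
      simp only [map_add, map_mul, pow_add]; ring]
  rw [map_add _ (1 + C (a + b) * X ^ n), map_mul _ (C (a * b)), h, mul_zero, add_zero]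

lemma pol_snoc (F : Type) [Field F] (k : ℕ) (c : Fin k → F) (a : F) :
    mkR F (k + 1) (pol F (k + 1) (Fin.snoc c a)) =
      mkR F (k + 1) (pol F k c) * mkR F (k + 1) (1 + C a * X ^ (k + 1)) := by
  have key : pol F k c * (1 + C a * X ^ (k + 1)) = pol F (k + 1) (Fin.snoc c a) +
      (∑ i : Fin k, C (c i) * X ^ (i : ℕ)) * C a * X ^ (k + 1 + 1) := by
    have h2 : ∑ i : Fin k, C (c i) * X ^ ((i : ℕ) + 1) =
        (∑ i : Fin k, C (c i) * X ^ (i : ℕ)) * X := by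
      rw [Finset.sum_mul]; exact Finset.sum_congr rfl fun i _ => by ring
    have h1 : pol F (k + 1) (Fin.snoc c a) = pol F k c + C a * X ^ (k + 1) := by
      simp [pol, Fin.sum_univ_castSucc, add_assoc]
    rw [h1, mul_add, mul_one, pol, h2]
    ring
  rw [← map_mul, key, map_add, map_mul _ _ (X ^ (k + 1 + 1)),
    mkR_X_pow_eq_zero F (k + 1) (k + 1 + 1) le_rfl, mul_zero, add_zero]

/-- The additive character `a ↦ ψ(1 + a x^n) ψ₀(a)`. -/
def addCh (F : Type) [Field F] (n : ℕ) (hn : 1 ≤ n) (ψ : MulChar (QuotR F n) ℂ)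
    (ψ₀ : AddChar F ℂ) : AddChar F ℂ where
  toFun a := ψ (mkR F n (1 + C a * X ^ n)) * ψ₀ a
  map_zero_eq_one' := by simp
  map_add_eq_mul' a b := by
    rw [mkR_one_add_mul F n hn, map_mul, AddChar.map_add_eq_mul]; ring

lemma tau_factor (F : Type) [Field F] [Fintype F] (k : ℕ) (ψ : MulChar (QuotR F (k + 1)) ℂ)
    (ψ₀ : AddChar F ℂ) :
    ∑ b : Fin (k + 1) → F, ψ (mkR F (k + 1) (pol F (k + 1) b)) * ψ₀ (b (Fin.last k)) =
    (∑ c : Fin k → F, ψ (mkR F (k + 1) (pol F k c))) *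
      ∑ a : F, addCh F (k + 1) (by omega) ψ ψ₀ a := by
  rw [← Equiv.sum_comp (Fin.snocEquiv (fun _ => F)), Fintype.sum_prod_type, Finset.sum_comm,
    Finset.sum_mul_sum]
  refine Finset.sum_congr rfl fun c _ => Finset.sum_congr rfl fun a _ => ?_
  have h1 : (Fin.snocEquiv (fun _ => F)) (a, c) = Fin.snoc (α := fun _ => F) c a := rfl
  rw [h1, pol_snoc, map_mul, Fin.snoc_last, mul_assoc]
  rfl

lemma key_pow (F : Type) [Field F] [Fintype F] (k : ℕ) (ψ₀ : AddChar F ℂ) (hψ₀ : ψ₀ ≠ 1)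
    (m : ℕ) (hm : 1 ≤ m) (μ : ℂ)
    (h : ∀ χ ∈ Snq F (k + 1), epsFactor F (k + 1) χ ^ m = μ) (ψ : MulChar (QuotR F (k + 1)) ℂ) :
    (∑ b : Fin (k + 1) → F, ψ (mkR F (k + 1) (pol F (k + 1) b)) * ψ₀ (b (Fin.last k))) ^ m =
    (((Fintype.card F : ℝ) ^ (((m : ℝ) * (((k + 1 : ℕ) : ℝ) + 1)) / 2 - 1) : ℝ) : ℂ) * μ *
      ∑ a : F, addCh F (k + 1) (by omega) ψ ψ₀ a := by
  classical
  rw [tau_factor, mul_pow]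
  by_cases h0 : addCh F (k + 1) (by omega) ψ ψ₀ = 0
  · rw [h0]
    have hq : (0 : ℝ) < Fintype.card F := by exact_mod_cast Fintype.card_pos
    simp only [AddChar.zero_apply, Finset.sum_const, Finset.card_univ, nsmul_eq_mul, mul_one]
    have hprim : IsPrimitiveChar F (k + 1) (evenize F (k + 1) ψ) := by
      by_contra hcon
      apply hψ₀
      ext a
      simp only [IsPrimitiveChar, not_exists, not_not] at hcon
      have h1 := hcon a
      rw [evenize_one_unit _ _ _ _ (by simp [coeff_X_pow])] at h1
      have h2 : addCh F (k + 1) (by omega) ψ ψ₀ a = 1 := by rw [h0]; rfl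
      have h3 : ψ (mkR F (k + 1) (1 + C a * X ^ (k + 1))) * ψ₀ a = 1 := h2
      rw [h1, one_mul] at h3
      rw [h3]; rfl
    have h1 := h _ ⟨_, evenize_even F (k + 1) ψ, hprim, rfl⟩
    rw [epsFactor, lam, Nat.add_sub_cancel, coeffSum_attached] at h1
    simp only [evenize_one_unit _ _ _ _ (pol_coeff_zero F k _)] at h1
    rw [← h1, mul_pow]
    have h2 : (Fintype.card F : ℝ) ^ m =
      (Fintype.card F : ℝ) ^ (((m : ℝ) * (((k + 1 : ℕ) : ℝ) + 1)) / 2 - 1) *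
      ((Fintype.card F : ℝ) ^ (-(k : ℝ) / 2)) ^ m * Fintype.card F := by
      rw [← Real.rpow_natCast (_ ^ (-(k : ℝ) / 2)), ← Real.rpow_mul hq.le, ← Real.rpow_add hq]
      nth_rewrite 3 [← Real.rpow_one (Fintype.card F : ℝ)]
      rw [← Real.rpow_add hq, ← Real.rpow_natCast]
      congr 1
      push_cast
      ring
    have h3 := congrArg (fun x : ℝ => (x : ℂ)) h2
    simp only [Complex.ofReal_mul, Complex.ofReal_pow, Complex.ofReal_natCast] at h3
    rw [h3]
    ring
  · rw [AddChar.sum_eq_ite, if_neg h0, zero_pow (by omega)]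
    simp

/-- if `ε_χ^m = μ` for all `χ ∈ S_{n,q}` then, for any nontrivial additive
character `ψ₀` of `F_q`, the Kloosterman-type sum
`∑ ψ₀(∑_j a_{n,j})` over arrays `(a_{i,j})` with `∏_j (1 + ∑_i a_{i,j} x^i) ≡ 1 mod x^(n+1)`
equals `q^(m(n+1)/2 - 1) μ`. -/
theorem statement16 (p : ℕ) (hp : p.Prime) (F : Type) [Field F] [Fintype F] (hchar : CharP F p)
    (n : ℕ) (hn : 1 ≤ n) (ψ₀ : AddChar F ℂ) (hψ₀ : ψ₀ ≠ 1)
    (m : ℕ) (hm : 1 ≤ m) (μ : ℂ)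
    (h : ∀ χ ∈ Snq F n, epsFactor F n χ ^ m = μ) :
    (∑ᶠ a ∈ {a : Fin n → Fin m → F |
        ∏ j : Fin m,
          (1 + ∑ i : Fin n, mkR F n (Polynomial.C (a i j) * Polynomial.X ^ ((i : ℕ) + 1))) = 1},
      ψ₀ (∑ j : Fin m, a (⟨n - 1, by omega⟩ : Fin n) j)) =
    ((((Fintype.card F : ℝ) ^ (((m : ℝ) * ((n : ℝ) + 1)) / 2 - 1) : ℝ)) : ℂ) * μ := by
  classical
  obtain ⟨k, rfl⟩ : ∃ k, n = k + 1 := ⟨n - 1, by omega⟩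
  have : Finite (QuotR F (k + 1)) := finite_QuotR F (k + 1)
  have : Fintype (MulChar (QuotR F (k + 1)) ℂ) := Fintype.ofFinite _
  set N : ℂ := ((Fintype.card (MulChar (QuotR F (k + 1)) ℂ) : ℕ) : ℂ) with hN
  have hN0 : N ≠ 0 := by
    rw [hN]; exact_mod_cast Fintype.card_ne_zero
  -- right-hand side
  have hR : ∑ ψ : MulChar (QuotR F (k + 1)) ℂ,
      (∑ b : Fin (k + 1) → F, ψ (mkR F (k + 1) (pol F (k + 1) b)) * ψ₀ (b (Fin.last k))) ^ m =
      (((Fintype.card F : ℝ) ^ (((m : ℝ) * (((k + 1 : ℕ) : ℝ) + 1)) / 2 - 1) : ℝ) : ℂ) * μ * N := by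
    simp_rw [key_pow F k ψ₀ hψ₀ m hm μ h]
    rw [← Finset.mul_sum, Finset.sum_comm]
    congr 1
    have h1 : ∀ a : F, ∑ ψ : MulChar (QuotR F (k + 1)) ℂ, addCh F (k + 1) (by omega) ψ ψ₀ a =
        if a = 0 then N else 0 := by
      intro a
      have h2 : ∑ ψ : MulChar (QuotR F (k + 1)) ℂ, addCh F (k + 1) (by omega) ψ ψ₀ a =
        (∑ ψ : MulChar (QuotR F (k + 1)) ℂ, ψ (mkR F (k + 1) (1 + C a * X ^ (k + 1)))) * ψ₀ a := by
        rw [Finset.sum_mul]; rfl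
      rw [h2, sum_mulChar_apply]
      have h3 : mkR F (k + 1) (1 + C a * X ^ (k + 1)) = 1 ↔ a = 0 := by
        constructor
        · intro h4
          rw [map_add, map_one, add_eq_left, mkR, Ideal.Quotient.eq_zero_iff_mem,
            Ideal.mem_span_singleton, X_pow_dvd_iff] at h4
          simpa using h4 (k + 1) (by omega)
        · rintro rfl; simp
      simp only [h3]
      split_ifs with h5
      · subst h5; simp [hN]
      · simp
    simp [h1]
  -- left-hand side
  have hL : ∑ ψ : MulChar (QuotR F (k + 1)) ℂ,
      (∑ b : Fin (k + 1) → F, ψ (mkR F (k + 1) (pol F (k + 1) b)) * ψ₀ (b (Fin.last k))) ^ m =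
      (∑ᶠ a ∈ {a : Fin (k + 1) → Fin m → F |
        ∏ j : Fin m,
          (1 + ∑ i : Fin (k + 1), mkR F (k + 1) (C (a i j) * X ^ ((i : ℕ) + 1))) = 1},
      ψ₀ (∑ j : Fin m, a (⟨k + 1 - 1, by omega⟩ : Fin (k + 1)) j)) * N := by
    simp_rw [Finset.sum_pow', Fintype.piFinset_univ, Finset.prod_mul_distrib, ← map_prod]
    rw [Finset.sum_comm]
    simp_rw [← Finset.sum_mul, sum_mulChar_apply]
    rw [finsum_mem_eq_finite_toFinset_sum _ (Set.toFinite _), Finset.sum_mul]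
    rw [← Equiv.sum_comp (Equiv.piComm (fun (_ : Fin (k + 1)) (_ : Fin m) => F))]
    simp_rw [ite_mul, zero_mul]
    rw [← Finset.sum_filter]
    refine Finset.sum_congr ?_ ?_
    · ext a
      simp [pol, Equiv.piComm]
    · intro a _
      have h6 : ∀ (s : Finset (Fin m)) (g : Fin m → F), ψ₀ (∑ j ∈ s, g j) = ∏ j ∈ s, ψ₀ (g j) := by
        intro s g
        induction s using Finset.induction_on with
        | empty => simp
        | insert x t hx ih =>
          rw [Finset.sum_insert hx, Finset.prod_insert hx, AddChar.map_add_eq_mul, ih]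
      rw [mul_comm, h6]
      rfl
  exact mul_right_cancel₀ hN0 (hL.symm.trans hR)

end
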